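/- arXiv:1202.2287 — 2 statements merged into one kernel-verified Lean document; each statement's English description precedes it below -/
import Mathlib

section
/- Every QRB-domain is a quasi-continuous dcpo. -/
/-!
If `(φ i)` is a generating family of quasi-deflations, then `φ i x ⋘ x` for every `i`: for a
directed set `d` with supremum `a ≥ x`, the finite directed family of the `φ i z`, `z ∈ d`, has a
largest element `φ i z₀`, and continuity gives `φ i a ≤ φ i z₀`, so
`z₀ ∈ φ i z₀ ⊆ φ i a ⊆ φ i x`. As `⋂ i, φ i x = ↑x`, the approximating finitary compacts intersect
to `↑x`.

They are directed because the `φ i x` are cofinal among them: if `U ⋘ x` is upward closed, then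
`φ i x ⊆ U` for some `i`. This is an instance of Rudin's Lemma (`exists_directed_meeting`):
otherwise some directed set `D` avoids `U` and meets every `φ i x`; its supremum then lies in
`⋂ i, φ i x = ↑x`, so `U ⋘ x` forces `D` to meet `U`.
-/

open Set TopologicalSpace

universe u v

section ScottTopology

variable {α : Type u}

/-- A Scott-open subset of a preorder: an upward-closed set that is inaccessible by
directed suprema. -/
def ScottOpen [Preorder α] (U : Set α) : Prop :=
  IsUpperSet U ∧ ∀ d : Set α, d.Nonempty → DirectedOn (· ≤ ·) d →
    ∀ a : α, IsLUB d a → a ∈ U → (d ∩ U).Nonempty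

/-- The Scott topology on a preorder. -/
def scottTop (α : Type u) [Preorder α] : TopologicalSpace α where
  IsOpen := ScottOpen
  isOpen_univ := by
    refine ⟨isUpperSet_univ, ?_⟩
    intro d hd _ a _ _
    obtain ⟨x, hx⟩ := hd
    exact ⟨x, hx, trivial⟩
  isOpen_inter := by
    rintro U V ⟨hU, hU'⟩ ⟨hV, hV'⟩
    refine ⟨hU.inter hV, ?_⟩
    intro d hd hdir a ha hmem
    obtain ⟨x, hxd, hxU⟩ := hU' d hd hdir a ha hmem.1
    obtain ⟨y, hyd, hyV⟩ := hV' d hd hdir a ha hmem.2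
    obtain ⟨z, hzd, hxz, hyz⟩ := hdir x hxd y hyd
    exact ⟨z, hzd, hU hxz hxU, hV hyz hyV⟩
  isOpen_sUnion := by
    intro S hS
    constructor
    · intro a b hab ha
      obtain ⟨U, hUS, haU⟩ := ha
      exact ⟨U, hUS, (hS U hUS).1 hab haU⟩
    · intro d hd hdir a ha hmem
      obtain ⟨U, hUS, haU⟩ := hmem
      obtain ⟨x, hxd, hxU⟩ := (hS U hUS).2 d hd hdir a ha haU
      exact ⟨x, hxd, U, hUS, hxU⟩

/-- A dcpo: every nonempty directed subset has a least upper bound. -/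
def IsDcpo (α : Type u) [Preorder α] : Prop :=
  ∀ d : Set α, d.Nonempty → DirectedOn (· ≤ ·) d → ∃ a : α, IsLUB d a

/-- The upward closure `↑E = {x | ∃ e ∈ E, e ≤ x}` of a set. -/
def upClos [Preorder α] (E : Set α) : Set α := {x | ∃ e ∈ E, e ≤ x}

/-- A finitary compact: a set of the form `↑E` with `E` finite and nonempty. -/
def IsFinitaryCompact [Preorder α] (A : Set α) : Prop :=
  ∃ E : Set α, E.Finite ∧ E.Nonempty ∧ A = upClos E

/-- `Fin(α)`: the nonempty finitary compacts of `α`, ordered by reverse inclusion. -/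
def FinCompacts (α : Type u) [Preorder α] : Type u := {A : Set α // IsFinitaryCompact A}

instance FinCompacts.instPartialOrder [Preorder α] : PartialOrder (FinCompacts α) where
  le A B := B.1 ⊆ A.1
  le_refl A := subset_rfl
  le_trans A B C h1 h2 := subset_trans h2 h1
  le_antisymm A B h1 h2 := Subtype.ext (subset_antisymm h2 h1)

/-- `U ⋘ x`: every directed family whose least upper bound is above `x` has some
member in `U`. -/
def approxes [Preorder α] (U : Set α) (x : α) : Prop :=
  ∀ d : Set α, d.Nonempty → DirectedOn (· ≤ ·) d →
    ∀ a : α, IsLUB d a → x ≤ a → ∃ z ∈ d, z ∈ U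

/-- A quasi-deflation: a map `φ : α → Fin_σ(α)`, continuous for the Scott topologies,
such that `x ∈ φ x` for every `x`, and with finite image. -/
def IsQuasiDeflation [Preorder α] (φ : α → FinCompacts α) : Prop :=
  @Continuous α (FinCompacts α) (scottTop α) (scottTop (FinCompacts α)) φ ∧
  (∀ x : α, x ∈ (φ x).1) ∧ (Set.range φ).Finite

/-- A generating family of quasi-deflations: a (nonempty) family of quasi-deflations,
directed in the pointwise reverse-inclusion order, with `⋂ i, φ i x = ↑x` for all `x`. -/
def IsGeneratingFamily [Preorder α] {I : Type v} (φ : I → α → FinCompacts α) : Prop :=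
  Nonempty I ∧
  (∀ i j : I, ∃ k : I, (∀ x, (φ k x).1 ⊆ (φ i x).1) ∧ (∀ x, (φ k x).1 ⊆ (φ j x).1)) ∧
  (∀ i, IsQuasiDeflation (φ i)) ∧
  (∀ x : α, (⋂ i, (φ i x).1) = Set.Ici x)

/-- A QRB-domain: a pointed dcpo with a generating family of quasi-deflations. -/
def IsQRBDomain (α : Type u) [PartialOrder α] : Prop :=
  IsDcpo α ∧ (∃ b : α, ∀ x, b ≤ x) ∧
  ∃ (I : Type u) (φ : I → α → FinCompacts α), IsGeneratingFamily φ

/-- An ωQRB-domain: a pointed dcpo with a countable generating family of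
quasi-deflations. -/
def IsOmegaQRBDomain (α : Type u) [PartialOrder α] : Prop :=
  IsDcpo α ∧ (∃ b : α, ∀ x, b ≤ x) ∧
  ∃ (I : Type u), Countable I ∧
    ∃ φ : I → α → FinCompacts α, IsGeneratingFamily φ

/-- A deflation on a pointed dcpo: a Scott-continuous map below the identity, with
finite image. -/
def IsDeflation [Preorder α] (f : α → α) : Prop :=
  @Continuous α α (scottTop α) (scottTop α) f ∧ (∀ x, f x ≤ x) ∧ (Set.range f).Finite

/-- An RB-domain: a pointed dcpo with a directed family of deflations whose pointwise
least upper bound is the identity. -/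
def IsRBDomain (α : Type u) [PartialOrder α] : Prop :=
  IsDcpo α ∧ (∃ b : α, ∀ x, b ≤ x) ∧
  ∃ (I : Type u) (f : I → α → α), Nonempty I ∧
    (∀ i j : I, ∃ k : I, (∀ x, f i x ≤ f k x) ∧ (∀ x, f j x ≤ f k x)) ∧
    (∀ i, IsDeflation (f i)) ∧
    ∀ x : α, IsLUB (Set.range fun i => f i x) x

/-- An ωB-domain (SFP-domain): a pointed dcpo with a non-decreasing sequence of
idempotent deflations whose pointwise least upper bound is the identity. -/
def IsOmegaBDomain (α : Type u) [PartialOrder α] : Prop :=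
  IsDcpo α ∧ (∃ b : α, ∀ x, b ≤ x) ∧
  ∃ f : ℕ → α → α,
    (∀ i, IsDeflation (f i)) ∧
    (∀ i, ∀ x, f i (f i x) = f i x) ∧
    (∀ i j : ℕ, i ≤ j → ∀ x, f i x ≤ f j x) ∧
    ∀ x : α, IsLUB (Set.range fun i => f i x) x

/-- A map finitely separated from the identity. -/
def IsFinitelySeparated [Preorder α] (f : α → α) : Prop :=
  ∃ M : Set α, M.Finite ∧ ∀ x : α, ∃ m ∈ M, f x ≤ m ∧ m ≤ x

/-- An FS-domain: a pointed dcpo with a directed family of continuous maps, each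
finitely separated from the identity, whose pointwise least upper bound is the
identity. -/
def IsFSDomain (α : Type u) [PartialOrder α] : Prop :=
  IsDcpo α ∧ (∃ b : α, ∀ x, b ≤ x) ∧
  ∃ (I : Type u) (f : I → α → α), Nonempty I ∧
    (∀ i j : I, ∃ k : I, (∀ x, f i x ≤ f k x) ∧ (∀ x, f j x ≤ f k x)) ∧
    (∀ i, @Continuous α α (scottTop α) (scottTop α) (f i) ∧ IsFinitelySeparated (f i)) ∧
    ∀ x : α, IsLUB (Set.range fun i => f i x) x

/-- A controlled QRB-domain: a pointed dcpo with a directed family of controlled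
quasi-deflations `(f i, φ i)` (i.e. `φ i x ⊆ ↑(f i x)`) with `x = sup_i f i x`. -/
def IsControlledQRBDomain (α : Type u) [PartialOrder α] : Prop :=
  IsDcpo α ∧ (∃ b : α, ∀ x, b ≤ x) ∧
  ∃ (I : Type u) (f : I → α → α) (φ : I → α → FinCompacts α), Nonempty I ∧
    (∀ i j : I, ∃ k : I,
      ((∀ x, f i x ≤ f k x) ∧ ∀ x, (φ k x).1 ⊆ (φ i x).1) ∧
      ((∀ x, f j x ≤ f k x) ∧ ∀ x, (φ k x).1 ⊆ (φ j x).1)) ∧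
    (∀ i, @Continuous α α (scottTop α) (scottTop α) (f i) ∧ IsQuasiDeflation (φ i) ∧
      ∀ x, (φ i x).1 ⊆ Set.Ici (f i x)) ∧
    ∀ x : α, IsLUB (Set.range fun i => f i x) x

/-- A continuous dcpo: for every `x`, the set of elements way-below `x` is
(nonempty and) directed and has `x` as least upper bound. -/
def IsContinuousDcpo (α : Type u) [Preorder α] : Prop :=
  IsDcpo α ∧ ∀ x : α,
    {y : α | approxes (Set.Ici y) x}.Nonempty ∧
    DirectedOn (· ≤ ·) {y : α | approxes (Set.Ici y) x} ∧
    IsLUB {y : α | approxes (Set.Ici y) x} x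

/-- The finitary compacts `↑E` (E finite nonempty) that approximate `x`. -/
def finUpsBelow [Preorder α] (x : α) : Set (Set α) :=
  {A | (∃ E : Set α, E.Finite ∧ E.Nonempty ∧ A = upClos E) ∧ approxes A x}

/-- A quasi-continuous dcpo. -/
def IsQuasiContinuous (α : Type u) [Preorder α] : Prop :=
  IsDcpo α ∧ ∀ x : α,
    (finUpsBelow x).Nonempty ∧
    DirectedOn (fun A B : Set α => B ⊆ A) (finUpsBelow x) ∧
    ⋂₀ finUpsBelow x = Set.Ici x

/-- The upper Vietoris topology on `Fin(α)` (the subspace topology induced from the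
Smyth powerspace of `α` with its Scott topology), generated by the sets
`◻U = {↑E | ↑E ⊆ U}` for `U` Scott-open. -/
def finUpperVietoris (α : Type u) [Preorder α] : TopologicalSpace (FinCompacts α) :=
  TopologicalSpace.generateFrom
    {S | ∃ U : Set α, ScottOpen U ∧ S = {A : FinCompacts α | A.1 ⊆ U}}

end ScottTopology

section Spaces

variable {X : Type u} {Y : Type v}

/-- The specialization preorder of a topological space: `x ≤ y` iff every open set
containing `x` contains `y`. -/
def specLE [TopologicalSpace X] (x y : X) : Prop :=
  ∀ U : Set X, IsOpen U → x ∈ U → y ∈ U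

/-- `↑x` in the specialization preorder. -/
def specUp [TopologicalSpace X] (x : X) : Set X := {y | specLE x y}

/-- Upward closure of a set in the specialization preorder. -/
def specUpSet [TopologicalSpace X] (A : Set X) : Set X := {y | ∃ a ∈ A, specLE a y}

/-- Downward closure of a set in the specialization preorder. -/
def specDownSet [TopologicalSpace X] (A : Set X) : Set X := {x | ∃ a ∈ A, specLE x a}

/-- A saturated set: one that is upward closed in the specialization preorder. -/
def IsSaturatedSet [TopologicalSpace X] (A : Set X) : Prop :=
  ∀ x ∈ A, ∀ y : X, specLE x y → y ∈ A

/-- A coherent space: the intersection of any two compact saturated subsets is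
compact. -/
def IsCoherent (X : Type u) [TopologicalSpace X] : Prop :=
  ∀ Q₁ Q₂ : Set X, IsCompact Q₁ → IsSaturatedSet Q₁ → IsCompact Q₂ → IsSaturatedSet Q₂ →
    IsCompact (Q₁ ∩ Q₂)

/-- A stably compact space: T0, compact, locally compact, sober and coherent. -/
def IsStablyCompact (X : Type u) [TopologicalSpace X] : Prop :=
  T0Space X ∧ CompactSpace X ∧ LocallyCompactSpace X ∧ QuasiSober X ∧ IsCoherent X

/-- A proper map: continuous, the downward closure of the image of any closed set is
closed, and the preimage of `↑y` is compact for every `y`. -/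
def PaperProper [TopologicalSpace X] [TopologicalSpace Y] (r : X → Y) : Prop :=
  Continuous r ∧
  (∀ F : Set X, IsClosed F → IsClosed (specDownSet (r '' F))) ∧
  ∀ y : Y, IsCompact (r ⁻¹' specUp y)

/-- The Smyth powerspace: nonempty compact saturated subsets. -/
def SmythP (X : Type u) [TopologicalSpace X] : Type u :=
  {Q : Set X // Q.Nonempty ∧ IsCompact Q ∧ IsSaturatedSet Q}

/-- The upper Vietoris topology on the Smyth powerspace, generated by the sets
`◻U = {Q | Q ⊆ U}`, `U` open. -/
instance SmythP.instTopologicalSpace [TopologicalSpace X] : TopologicalSpace (SmythP X) :=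
  TopologicalSpace.generateFrom
    {S | ∃ U : Set X, IsOpen U ∧ S = {Q : SmythP X | Q.1 ⊆ U}}

/-- The order on the Smyth powerspace: reverse inclusion. -/
instance SmythP.instPartialOrder [TopologicalSpace X] : PartialOrder (SmythP X) where
  le Q Q' := Q'.1 ⊆ Q.1
  le_refl Q := subset_rfl
  le_trans Q Q' Q'' h1 h2 := subset_trans h2 h1
  le_antisymm Q Q' h1 h2 := Subtype.ext (subset_antisymm h2 h1)

/-- A quasi-retraction `r : X → Y`: a continuous map admitting a continuous
quasi-section `ς : Y → S_V(X)` with `↑{r x | x ∈ ς y} = ↑y` for every `y`. -/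
def IsQuasiRetraction [TopologicalSpace X] [TopologicalSpace Y] (r : X → Y) : Prop :=
  Continuous r ∧
  ∃ ς : Y → SmythP X, Continuous ς ∧ ∀ y : Y, specUpSet (r '' (ς y).1) = specUp y

/-- The specialization ordering of a T0 space, as a partial order. -/
def specOrder (X : Type u) [TopologicalSpace X] [T0Space X] : PartialOrder X where
  le := specLE
  le_refl x := fun _ _ h => h
  le_trans x y z h1 h2 := fun U hU hx => h2 U hU (h1 U hU hx)
  le_antisymm x y h1 h2 :=
    (inseparable_iff_forall_isOpen.mpr fun U hU => ⟨h1 U hU, h2 U hU⟩).eq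

/-- A continuous probability valuation on a topological space: a map from opens to
nonnegative reals that is strict, monotone, modular, continuous (preserves directed
suprema of opens) and normalized. -/
structure IsProbValuation [TopologicalSpace X] (ν : Opens X → NNReal) : Prop where
  empty : ν ⊥ = 0
  mono : ∀ U V : Opens X, U ≤ V → ν U ≤ ν V
  modular : ∀ U V : Opens X, ν (U ⊔ V) + ν (U ⊓ V) = ν U + ν V
  scont : ∀ S : Set (Opens X), S.Nonempty → DirectedOn (· ≤ ·) S →
    ν (sSup S) = ⨆ U ∈ S, ν U
  total : ν ⊤ = 1

/-- `V_1(X)`: the probability valuations on `X`, ordered pointwise. -/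
abbrev ProbVal (X : Type u) [TopologicalSpace X] : Type u :=
  {ν : Opens X → NNReal // IsProbValuation ν}

/-- The weak topology on `V_1(X)`, generated by the sets `[U > a]`. -/
def weakTop (X : Type u) [TopologicalSpace X] : TopologicalSpace (ProbVal X) :=
  TopologicalSpace.generateFrom
    {S | ∃ (U : Opens X) (a : ℝ), S = {ν : ProbVal X | a < (ν.1 U : ℝ)}}

/-- `ν†(Q) = inf {ν U | U open, Q ⊆ U}`. -/
noncomputable def dagVal [TopologicalSpace X] (ν : Opens X → NNReal) (Q : Set X) :
    NNReal :=
  ⨅ U : {U : Opens X // Q ⊆ U.1}, ν U.1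

end Spaces

section Paths

variable {Y : Type u}

/-- A path in a pointed poset: a finite covering chain starting at the least
element. -/
def IsPathIn [PartialOrder Y] (bot : Y) (S : Set Y) : Prop :=
  ∃ (n : ℕ) (c : Fin (n + 1) → Y), c 0 = bot ∧
    (∀ i : Fin n, c i.castSucc ⋖ c i.succ) ∧ S = Set.range c

/-- The path space `Π(Y)` of a pointed poset, ordered by inclusion. -/
abbrev PathSpace (Y : Type u) [PartialOrder Y] (bot : Y) : Type u :=
  {S : Set Y // IsPathIn bot S}

end Paths

lemma isUpperSet_upClos {X : Type u} [Preorder X] (E : Set X) : IsUpperSet (upClos E) :=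
  fun _ _ hab ⟨e, he, hea⟩ => ⟨e, he, hea.trans hab⟩

lemma sInter_chain_inter_finite_nonempty {X : Type u} {c : Set (Set X)} {F : Set X}
    (hF : F.Finite) (hc : IsChain (· ⊆ ·) c) (hne : c.Nonempty)
    (h : ∀ s ∈ c, (s ∩ F).Nonempty) : (⋂₀ c ∩ F).Nonempty := by
  have hfin : ((fun s => s ∩ F) '' c).Finite :=
    hF.powerset.subset (by rintro _ ⟨s, _, rfl⟩; exact inter_subset_right)
  obtain ⟨m, hm⟩ := hfin.exists_minimal (hne.image _)
  obtain ⟨s, hs, rfl⟩ := hm.prop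
  obtain ⟨e, hes, heF⟩ := h s hs
  refine ⟨e, fun t ht => ?_, heF⟩
  rcases hc.total hs ht with hst | hts
  · exact hst hes
  · exact (hm.le_of_le ⟨t, ht, rfl⟩ (inter_subset_inter_left F hts) ⟨hes, heF⟩).1

/-- A form of Rudin's Lemma. The directed set is a lower set `D` avoiding `U` that is minimal among
those meeting every `A i`: for `a ∈ D`, minimality makes `D \ ↑a` miss some `A i`, i.e.
`D ∩ A i ⊆ ↑a`. -/
lemma exists_directed_meeting {X : Type u} {I : Type v} [Preorder X] [Nonempty I] {A : I → Set X}
    (hA : ∀ i, IsFinitaryCompact (A i)) (hdir : ∀ i j, ∃ k, A k ⊆ A i ∧ A k ⊆ A j)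
    {U : Set X} (hU : IsUpperSet U) (hAU : ∀ i, ¬ A i ⊆ U) :
    ∃ D : Set X, D.Nonempty ∧ DirectedOn (· ≤ ·) D ∧ Disjoint D U ∧
      ∀ i, (D ∩ A i).Nonempty := by
  obtain ⟨D, hDU, hD⟩ := zorn_superset_nonempty
    {D : Set X | IsLowerSet D ∧ ∀ i, (D ∩ A i).Nonempty} (by
      intro c hcS hc hne
      refine ⟨⋂₀ c, ⟨isLowerSet_sInter fun s hs => (hcS hs).1, fun i => ?_⟩,
        fun s hs => sInter_subset_of_mem hs⟩
      obtain ⟨E, hE, -, hAE⟩ := hA i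
      obtain ⟨e, hec, heE⟩ := sInter_chain_inter_finite_nonempty hE hc hne (by
        intro s hs
        obtain ⟨y, hys, hyA⟩ := (hcS hs).2 i
        rw [hAE] at hyA
        obtain ⟨e, he, hey⟩ := hyA
        exact ⟨e, (hcS hs).1 hey hys, he⟩)
      exact ⟨e, hec, hAE ▸ ⟨e, heE, le_rfl⟩⟩)
    Uᶜ ⟨hU.compl, fun i => by
      obtain ⟨y, hyA, hyU⟩ := not_subset.1 (hAU i)
      exact ⟨y, hyU, hyA⟩⟩
  have key : ∀ a ∈ D, ∃ i, ∀ y ∈ D, y ∈ A i → a ≤ y := by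
    intro a ha
    by_contra! hcon
    have hmem : IsLowerSet (D \ Ici a) ∧ ∀ i, ((D \ Ici a) ∩ A i).Nonempty := by
      refine ⟨fun y z hzy hy => ⟨hD.prop.1 hzy hy.1, fun haz => hy.2 (le_trans haz hzy)⟩,
        fun i => ?_⟩
      obtain ⟨y, hyD, hyA, hay⟩ := hcon i
      exact ⟨y, ⟨hyD, hay⟩, hyA⟩
    exact (hD.le_of_le hmem sdiff_subset ha).2 le_rfl
  refine ⟨D, ?_, ?_, disjoint_left.2 fun y hy => hDU hy, hD.prop.2⟩
  · obtain ⟨y, hy, -⟩ := hD.prop.2 (Classical.arbitrary I)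
    exact ⟨y, hy⟩
  · intro a ha b hb
    obtain ⟨i, hi⟩ := key a ha
    obtain ⟨j, hj⟩ := key b hb
    obtain ⟨k, hki, hkj⟩ := hdir i j
    obtain ⟨y, hyD, hyA⟩ := hD.prop.2 k
    exact ⟨y, hyD, hi y hyD (hki hyA), hj y hyD (hkj hyA)⟩

lemma scottOpen_not_le {X : Type u} [Preorder X] (b : X) : ScottOpen {a : X | ¬ a ≤ b} := by
  refine ⟨fun x y hxy hx hy => hx (hxy.trans hy), fun d _ _ a ha hab => ?_⟩
  by_contra hcon
  refine hab (ha.2 fun z hz => ?_)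
  by_contra hzb
  exact hcon ⟨z, hz, hzb⟩

lemma IsQuasiDeflation.approxes {X : Type u} [PartialOrder X] {φ : X → FinCompacts X}
    (hφ : IsQuasiDeflation φ) (x : X) : approxes (φ x).1 x := by
  intro d hne hd a ha hxa
  obtain ⟨hcont, hself, hfin⟩ := hφ
  have hopen : ∀ B, ScottOpen {y | ¬ φ y ≤ B} := fun B =>
    @IsOpen.preimage _ _ (scottTop X) (scottTop (FinCompacts X)) φ hcont _ (scottOpen_not_le B)
  have hmono : ∀ y z, y ≤ z → φ y ≤ φ z := by
    intro y z hyz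
    by_contra h
    exact (hopen (φ z)).1 hyz h le_rfl
  obtain ⟨m, hm⟩ := (hfin.subset (image_subset_range φ d)).exists_maximal (hne.image _)
  obtain ⟨z, hz, rfl⟩ := hm.prop
  -- A maximal element of the directed set `φ '' d` is its greatest element.
  have hmax : ∀ w ∈ d, φ w ≤ φ z := by
    intro w hw
    obtain ⟨v, hv, hwv, hzv⟩ := hd w hw z hz
    exact (hmono w v hwv).trans (hm.le_of_ge ⟨v, hv, rfl⟩ (hmono z v hzv))
  have haz : φ a ≤ φ z := by
    by_contra h
    obtain ⟨w, hw, hwz⟩ := (hopen (φ z)).2 d hne hd a ha h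
    exact hwz (hmax w hw)
  exact ⟨z, hz, ((hmono x a hxa).trans haz) (hself z)⟩

/-- Every QRB-domain is a quasi-continuous dcpo. -/
theorem QRB_quasiContinuous {X : Type u} [PartialOrder X] (hX : IsQRBDomain X) :
    IsQuasiContinuous X := by
  obtain ⟨hdcpo, -, I, φ, hI, hdir, hqd, hgen⟩ := hX
  refine ⟨hdcpo, fun x => ?_⟩
  have hmem : ∀ i, (φ i x).1 ∈ finUpsBelow x := fun i => ⟨(φ i x).2, (hqd i).approxes x⟩
  have hcofinal : ∀ B ∈ finUpsBelow x, ∃ i, (φ i x).1 ⊆ B := by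
    rintro _ ⟨⟨E, -, -, rfl⟩, happ⟩
    by_contra! hcon
    obtain ⟨D, hDne, hDdir, hDE, hmeet⟩ := exists_directed_meeting (fun i => (φ i x).2)
      (fun i j => (hdir i j).imp fun k hk => ⟨hk.1 x, hk.2 x⟩) (isUpperSet_upClos E) hcon
    obtain ⟨s, hs⟩ := hdcpo D hDne hDdir
    have hxs : s ∈ ⋂ i, (φ i x).1 := by
      refine mem_iInter.2 fun i => ?_
      obtain ⟨y, hyD, hy⟩ := hmeet i
      obtain ⟨F, -, -, hF⟩ := (φ i x).2
      rw [hF] at hy ⊢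
      exact isUpperSet_upClos F (hs.1 hyD) hy
    rw [hgen x] at hxs
    obtain ⟨z, hzD, hzE⟩ := happ D hDne hDdir s hs hxs
    exact disjoint_left.1 hDE hzD hzE
  refine ⟨⟨_, hmem hI.some⟩, ?_, ?_⟩
  · intro A hA B hB
    obtain ⟨i, hi⟩ := hcofinal A hA
    obtain ⟨j, hj⟩ := hcofinal B hB
    obtain ⟨k, hki, hkj⟩ := hdir i j
    exact ⟨_, hmem k, (hki x).trans hi, (hkj x).trans hj⟩
  · apply Subset.antisymm
    · rw [← hgen x]
      exact subset_iInter fun i => sInter_subset_of_mem (hmem i)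
    · intro y hxy B hB
      obtain ⟨i, hi⟩ := hcofinal B hB
      have hy : y ∈ ⋂ i, (φ i x).1 := by rwa [hgen x]
      exact hi (mem_iInter.1 hy i)
end

section
/- For any two QRB-domains X and Y, the product X × Y with the componentwise ordering is a QRB-domain; if X and Y are ωQRB-domains, then so is X × Y. Moreover, if (φ_i)_{i∈I} and (ψ_j)_{j∈J} are generating families of quasi-deflations on X and Y respectively, then the family (χ_{ij})_{i∈I, j∈J} with χ_{ij}(x,y) = φ_i(x) × ψ_j(y) is a generating family of quasi-deflations on X × Y. -/
/-!
A quasi-deflation has finite image and is Scott-continuous, so along a directed set with least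
upper bound `a` it not only converges to its value at `a` but attains it
(`IsQuasiDeflation.exists_mem_eq`). Consequently, along a directed subset `d` of `X × Y` with least
upper bound `(a, b)`, the map `(x, y) ↦ φ x × ψ y` attains its value at `(a, b)`: both factors are
monotone, so it suffices to take a common upper bound in `d` of a point where `φ` reaches `φ a` and
of a point where `ψ` reaches `ψ b`. Continuity of the product map follows at once
(`IsQuasiDeflation.prod`), and the remaining requirements on a generating family are checked
componentwise, using that products commute with upward closures and with intersections.
-/

open Set TopologicalSpace

universe u v

/-! ### Quasi-deflations along directed sets -/

/-- A principal ideal is Scott-closed. -/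
lemma scottOpen_compl_Iic {α : Type u} [Preorder α] (b : α) : ScottOpen (Set.Iic b)ᶜ := by
  refine ⟨(isLowerSet_Iic b).compl, fun d _ _ a ha hab => ?_⟩
  by_contra h
  exact hab (ha.2 fun x hx => not_not.1 fun hxb => h ⟨x, hx, hxb⟩)

lemma IsQuasiDeflation.scottOpen_preimage {α : Type u} [Preorder α] {φ : α → FinCompacts α}
    (h : IsQuasiDeflation φ) {U : Set (FinCompacts α)} (hU : ScottOpen U) :
    ScottOpen (φ ⁻¹' U) :=
  (@continuous_def _ _ (scottTop α) (scottTop (FinCompacts α)) φ).1 h.1 U hU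

lemma IsQuasiDeflation.monotone {α : Type u} [Preorder α] {φ : α → FinCompacts α}
    (h : IsQuasiDeflation φ) : Monotone φ := by
  intro a b hab
  by_contra hn
  exact (h.scottOpen_preimage (scottOpen_compl_Iic (φ b))).1 hab hn (Set.mem_Iic.2 le_rfl)

/-- A quasi-deflation attains its value at a directed least upper bound: its image on the directed
set is finite and directed, hence has a greatest element, which must be the limit value. -/
lemma IsQuasiDeflation.exists_mem_eq {α : Type u} [Preorder α] {φ : α → FinCompacts α}
    (h : IsQuasiDeflation φ) {d : Set α} (hne : d.Nonempty) (hd : DirectedOn (· ≤ ·) d)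
    {a : α} (ha : IsLUB d a) : ∃ x ∈ d, φ x = φ a := by
  have hfin : (φ '' d).Finite := h.2.2.subset (Set.image_subset_range _ _)
  obtain ⟨_, ⟨x, hx, rfl⟩, hmax⟩ := hfin.exists_maximal (hne.image φ)
  have hub : ∀ y ∈ d, φ y ≤ φ x := by
    intro y hy
    obtain ⟨z, hz, hxz, hyz⟩ := hd x hx y hy
    exact (h.monotone hyz).trans (hmax ⟨z, hz, rfl⟩ (h.monotone hxz))
  refine ⟨x, hx, le_antisymm (h.monotone (ha.1 hx)) ?_⟩
  by_contra hn
  obtain ⟨y, hy, hyx⟩ :=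
    (h.scottOpen_preimage (scottOpen_compl_Iic (φ x))).2 d hne hd a ha hn
  exact hyx (hub y hy)

/-! ### Products -/

lemma upClos_prod {X : Type u} {Y : Type v} [Preorder X] [Preorder Y] (E : Set X) (F : Set Y) :
    upClos (E ×ˢ F) = upClos E ×ˢ upClos F := by
  ext ⟨x, y⟩
  constructor
  · rintro ⟨⟨e, f⟩, ⟨he, hf⟩, hx, hy⟩
    exact ⟨⟨e, he, hx⟩, ⟨f, hf, hy⟩⟩
  · rintro ⟨⟨e, he, hx⟩, ⟨f, hf, hy⟩⟩
    exact ⟨⟨e, f⟩, ⟨he, hf⟩, hx, hy⟩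

/-- The product of two finitary compacts, as a finitary compact of the product. -/
def FinCompacts.prod {X : Type u} {Y : Type v} [Preorder X] [Preorder Y]
    (A : FinCompacts X) (B : FinCompacts Y) : FinCompacts (X × Y) :=
  ⟨A.1 ×ˢ B.1, by
    obtain ⟨E, hE, hE', hA⟩ := A.2
    obtain ⟨F, hF, hF', hB⟩ := B.2
    exact ⟨E ×ˢ F, hE.prod hF, hE'.prod hF', by rw [upClos_prod, hA, hB]⟩⟩

lemma IsQuasiDeflation.prod {X : Type u} {Y : Type v} [Preorder X] [Preorder Y]
    {φ : X → FinCompacts X} {ψ : Y → FinCompacts Y}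
    (hφ : IsQuasiDeflation φ) (hψ : IsQuasiDeflation ψ) :
    IsQuasiDeflation fun p : X × Y => (φ p.1).prod (ψ p.2) := by
  refine ⟨?_, fun p => ⟨hφ.2.1 p.1, hψ.2.1 p.2⟩, ?_⟩
  · refine (@continuous_def _ _ (scottTop (X × Y)) (scottTop (FinCompacts (X × Y))) _).2 ?_
    rintro U ⟨hU, -⟩
    refine ⟨fun p q hpq hp =>
      hU (Set.prod_mono (hφ.monotone hpq.1) (hψ.monotone hpq.2)) hp, ?_⟩
    rintro d hne hd ⟨a, b⟩ hab hmem
    obtain ⟨ha, hb⟩ := isLUB_prod.1 hab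
    obtain ⟨_, ⟨p, hp, rfl⟩, hpa⟩ :=
      hφ.exists_mem_eq (hne.image _) (hd.mono_comp fun _ _ h => h.1) ha
    obtain ⟨_, ⟨q, hq, rfl⟩, hqb⟩ :=
      hψ.exists_mem_eq (hne.image _) (hd.mono_comp fun _ _ h => h.2) hb
    obtain ⟨r, hr, hpr, hqr⟩ := hd p hp q hq
    -- The order is reverse inclusion, so the product at `r` is above the product at `(a, b)`.
    refine ⟨r, hr, hU (Set.prod_mono ?_ ?_) hmem⟩
    · exact hpa.ge.trans (hφ.monotone hpr.1)
    · exact hqb.ge.trans (hψ.monotone hqr.2)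
  · refine (hφ.2.2.image2 FinCompacts.prod hψ.2.2).subset ?_
    rintro _ ⟨p, rfl⟩
    exact ⟨_, ⟨p.1, rfl⟩, _, ⟨p.2, rfl⟩, rfl⟩

lemma IsGeneratingFamily.prod {X : Type u} {Y : Type v} [Preorder X] [Preorder Y]
    {I : Type*} {J : Type*} {φ : I → X → FinCompacts X} {ψ : J → Y → FinCompacts Y}
    (hφ : IsGeneratingFamily φ) (hψ : IsGeneratingFamily ψ) :
    IsGeneratingFamily fun (k : I × J) (p : X × Y) => (φ k.1 p.1).prod (ψ k.2 p.2) := by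
  obtain ⟨⟨i₀⟩, hdirφ, hqφ, hφ⟩ := hφ
  obtain ⟨⟨j₀⟩, hdirψ, hqψ, hψ⟩ := hψ
  refine ⟨⟨(i₀, j₀)⟩, ?_, fun k => (hqφ k.1).prod (hqψ k.2), ?_⟩
  · rintro ⟨i, j⟩ ⟨i', j'⟩
    obtain ⟨k, hk, hk'⟩ := hdirφ i i'
    obtain ⟨l, hl, hl'⟩ := hdirψ j j'
    exact ⟨(k, l), fun p => Set.prod_mono (hk p.1) (hl p.2),
      fun p => Set.prod_mono (hk' p.1) (hl' p.2)⟩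
  · rintro ⟨x, y⟩
    rw [← Set.Ici_prod_Ici, ← hφ x, ← hψ y]
    ext ⟨s, t⟩
    simp only [FinCompacts.prod, Set.mem_iInter, Set.mem_prod]
    exact ⟨fun h => ⟨fun i => (h (i, j₀)).1, fun j => (h (i₀, j)).2⟩,
      fun h k => ⟨h.1 k.1, h.2 k.2⟩⟩

lemma IsDcpo.prod {X : Type u} {Y : Type v} [Preorder X] [Preorder Y]
    (hX : IsDcpo X) (hY : IsDcpo Y) : IsDcpo (X × Y) := by
  intro d hne hd
  obtain ⟨a, ha⟩ := hX _ (hne.image Prod.fst) (hd.mono_comp fun _ _ h => h.1)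
  obtain ⟨b, hb⟩ := hY _ (hne.image Prod.snd) (hd.mono_comp fun _ _ h => h.2)
  exact ⟨(a, b), isLUB_prod.2 ⟨ha, hb⟩⟩

/-- Products of (ω)QRB-domains are (ω)QRB-domains; moreover the product of two
generating families of quasi-deflations, `χ (i,j) (x,y) = φ i x × ψ j y`, is a
generating family of quasi-deflations on `X × Y`. -/
theorem QRB_prod {X : Type u} {Y : Type v} [PartialOrder X] [PartialOrder Y] :
    (IsQRBDomain X → IsQRBDomain Y → IsQRBDomain (X × Y)) ∧
    (IsOmegaQRBDomain X → IsOmegaQRBDomain Y → IsOmegaQRBDomain (X × Y)) ∧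
    (∀ (I : Type u) (J : Type v) (φ : I → X → FinCompacts X)
        (ψ : J → Y → FinCompacts Y),
      IsGeneratingFamily φ → IsGeneratingFamily ψ →
      ∃ χ : I × J → (X × Y) → FinCompacts (X × Y),
        (∀ (i : I) (j : J) (x : X) (y : Y),
          (χ (i, j) (x, y)).1 = (φ i x).1 ×ˢ (ψ j y).1) ∧
        IsGeneratingFamily χ) := by
  refine ⟨?_, ?_, fun I J φ ψ hφ hψ => ⟨_, fun _ _ _ _ => rfl, hφ.prod hψ⟩⟩
  · rintro ⟨hX, ⟨a, ha⟩, I, φ, hφ⟩ ⟨hY, ⟨b, hb⟩, J, ψ, hψ⟩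
    exact ⟨hX.prod hY, ⟨(a, b), fun p => ⟨ha p.1, hb p.2⟩⟩, I × J, _, hφ.prod hψ⟩
  · rintro ⟨hX, ⟨a, ha⟩, I, hI, φ, hφ⟩ ⟨hY, ⟨b, hb⟩, J, hJ, ψ, hψ⟩
    exact ⟨hX.prod hY, ⟨(a, b), fun p => ⟨ha p.1, hb p.2⟩⟩, I × J, inferInstance, _,
      hφ.prod hψ⟩
end
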